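/- Let I and P be homogeneous ideals in k[x_0,...,x_n] over a perfect field k, with I unmixed radical of projective dimension d ≥ 0 and P prime of projective dimension e > d. Then there exists a homogeneous polynomial f ∈ I with f ∉ P and deg f ≤ (e! · deg I)^{1/(e−d)}. -/

import Mathlib

open MvPolynomial

/-- Integer-valued binomial coefficient `C(a, b)`, zero when `a < 0` or `a < b`. -/
def ichoose (a : ℤ) (b : ℕ) : ℤ := if a < 0 then 0 else (a.toNat).choose b

/-- The Hilbert function of a (homogeneous) ideal `I ⊆ k[x₀, …, xₙ]`:
`m ↦ dim_k (k[x₀, …, xₙ]/I)_m`. -/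
noncomputable def hilbF (k : Type*) [Field k] {n : ℕ}
    (I : Ideal (MvPolynomial (Fin (n+1)) k)) (m : ℕ) : ℕ :=
  Module.finrank k ((homogeneousSubmodule (Fin (n+1)) k m).map
    (Ideal.Quotient.mkₐ k I).toLinearMap)

open scoped Classical in
/-- The Hilbert polynomial of `I` (the polynomial agreeing with the Hilbert
function for all large `m`; junk value `0` if none exists). -/
noncomputable def hilbP (k : Type*) [Field k] {n : ℕ}
    (I : Ideal (MvPolynomial (Fin (n+1)) k)) : Polynomial ℚ :=
  if h : ∃ P : Polynomial ℚ, ∀ᶠ m : ℕ in Filter.atTop,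
      (hilbF k I m : ℚ) = P.eval (m : ℚ) then h.choose else 0

/-- The (algebraic) degree of a homogeneous ideal `I` of projective dimension
`d ≥ 0`: `d! · (leading coefficient of its Hilbert polynomial)`. -/
noncomputable def idealDeg (k : Type*) [Field k] {n : ℕ}
    (I : Ideal (MvPolynomial (Fin (n+1)) k)) : ℕ :=
  ⌊((hilbP k I).natDegree.factorial : ℚ) * (hilbP k I).leadingCoeff⌋₊

/-- The projective dimension of a homogeneous ideal `I` (of dimension `≥ 0`):
the degree of its Hilbert polynomial. -/
noncomputable def idealDim (k : Type*) [Field k] {n : ℕ}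
    (I : Ideal (MvPolynomial (Fin (n+1)) k)) : ℕ :=
  (hilbP k I).natDegree

/-- A homogeneous ideal: one containing all homogeneous components of its elements. -/
def IsHomogeneousIdeal {k : Type*} [Field k] {n : ℕ}
    (I : Ideal (MvPolynomial (Fin (n+1)) k)) : Prop :=
  ∀ f ∈ I, ∀ m : ℕ, homogeneousComponent m f ∈ I

/-- `I` is unmixed of projective dimension `d`: every associated prime `P` of
`k[x₀,…,xₙ]/I` satisfies `dim k[x₀,…,xₙ]/P = d + 1` (affine Krull dimension). -/
def IsUnmixed (k : Type*) [Field k] {n : ℕ}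
    (I : Ideal (MvPolynomial (Fin (n+1)) k)) (d : ℕ) : Prop :=
  ∀ P ∈ associatedPrimes (MvPolynomial (Fin (n+1)) k)
      (MvPolynomial (Fin (n+1)) k ⧸ I),
    ringKrullDim (MvPolynomial (Fin (n+1)) k ⧸ P) = ((d + 1 : ℕ) : WithBot (WithTop ℕ))

/-!
Let `W` be the span of the variables in `A = k[x₀, …, xₙ]/I`, so that the Hilbert function is
`h_I(m) = dim W ^ m`. Over an infinite field, a reduction `Y ⊆ W` of minimal dimension `s` (that
is, `W ^ (N + 1) = Y W ^ N`) satisfies no homogeneous relation. Hence `dim W ^ m` lies between the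
number `C(m + s - 1, s - 1)` of monomials of degree `m` in `s` variables and a multiple of a shift
of it, so `s` exceeds the degree of the Hilbert polynomial by one; this gives
`h_P(m) ≥ C(m + e, e)`.

If `A` embeds in a product of domains, each with at least this growth, then nonzero forms in a
basis `y` of `Y` are nonzerodivisors of `A`. Take a maximal family of `D` elements of `W ^ N`
which is linearly independent over the forms in `y`. Some form `δ(y)` multiplies `W ^ N` into the
span of this family, and comparing orders of vanishing at a point where `δ` does not vanish yields
the upper bound `h_I(m) ≤ D C(m + d, d)` without any error term. Here `D ≤ deg I`, because the
translates of the family by forms are independent. For unmixed radical `I` the domains are the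
quotients by the minimal primes, and their growth comes from their Krull dimension.

A finite field `k` is replaced by `k((t))`, and `A` by `A((t))`. At `m = ⌊(e! deg I)^(1/(e-d))⌋`
the two bounds give `h_I(m) < h_P(m)`, so some form of degree `m` lies in `I` but not in `P`.
-/

section PolynomialGrowth

open Filter

variable {K : Type*} [NormedField K] [LinearOrder K] [IsStrictOrderedRing K] [OrderTopology K]
  [Archimedean K] {p q : Polynomial K}

lemma leadingCoeff_nonneg_of_eventually_nonneg
    (hp : ∀ᶠ m : ℕ in atTop, 0 ≤ p.eval (m : K)) : 0 ≤ p.leadingCoeff := by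
  by_contra! hneg
  by_cases hdeg : 0 < p.degree
  · have hlim := (p.tendsto_atBot_of_leadingCoeff_nonpos hdeg hneg.le).comp
      (tendsto_natCast_atTop_atTop (R := K))
    obtain ⟨m, hm, hm'⟩ := (hp.and (hlim.eventually (eventually_lt_atBot 0))).exists
    exact hm.not_gt hm'
  · have hconst := Polynomial.eq_C_of_degree_le_zero (not_lt.mp hdeg)
    obtain ⟨m, hm⟩ := hp.exists
    rw [hconst, Polynomial.eval_C] at hm
    rw [hconst, Polynomial.leadingCoeff_C] at hneg
    exact hm.not_gt hneg

lemma natDegree_le_of_eventually_le (hp : ∀ᶠ m : ℕ in atTop, 0 ≤ p.eval (m : K))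
    (hpq : ∀ᶠ m : ℕ in atTop, p.eval (m : K) ≤ q.eval (m : K)) : p.natDegree ≤ q.natDegree := by
  by_contra! hlt
  have hp_lead := leadingCoeff_nonneg_of_eventually_nonneg hp
  have hqp_lead := leadingCoeff_nonneg_of_eventually_nonneg (p := q - p)
    (hpq.mono fun m hm => by simpa using hm)
  rw [Polynomial.leadingCoeff_sub_of_degree_lt' (Polynomial.degree_lt_degree hlt),
    Left.nonneg_neg_iff] at hqp_lead
  have hp_zero := Polynomial.leadingCoeff_eq_zero.mp (hqp_lead.antisymm hp_lead)
  simp [hp_zero] at hlt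

lemma leadingCoeff_le_of_eventually_le (hdeg : p.natDegree = q.natDegree)
    (hpq : ∀ᶠ m : ℕ in atTop, p.eval (m : K) ≤ q.eval (m : K)) :
    p.leadingCoeff ≤ q.leadingCoeff := by
  by_contra! hlt
  have hcoeff : (q - p).coeff p.natDegree = q.leadingCoeff - p.leadingCoeff := by
    rw [Polynomial.coeff_sub, Polynomial.leadingCoeff, Polynomial.leadingCoeff, hdeg]
  have hdeg_sub : (q - p).natDegree = p.natDegree := by
    refine Polynomial.natDegree_eq_of_le_of_coeff_ne_zero ?_ (hcoeff ▸ (sub_neg.mpr hlt).ne)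
    exact (Polynomial.natDegree_sub_le _ _).trans (by simp [hdeg])
  have hqp_lead := leadingCoeff_nonneg_of_eventually_nonneg (p := q - p)
    (hpq.mono fun m hm => by simpa using hm)
  rw [Polynomial.leadingCoeff, hdeg_sub, hcoeff] at hqp_lead
  linarith

lemma eq_zero_of_eventually_eval_eq_zero (hp : ∀ᶠ m : ℕ in atTop, p.eval (m : K) = 0) :
    p = 0 := by
  have hlead := leadingCoeff_nonneg_of_eventually_nonneg (hp.mono fun _ hm => hm.ge)
  have hlead' := leadingCoeff_nonneg_of_eventually_nonneg (p := -p)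
    (hp.mono fun _ hm => by simp [hm])
  rw [Polynomial.leadingCoeff_neg, Left.nonneg_neg_iff] at hlead'
  exact Polynomial.leadingCoeff_eq_zero.mp (hlead'.antisymm hlead)

end PolynomialGrowth

section MultichooseGrowth

open Filter

lemma multichoose_succ_eq_choose (s m : ℕ) : (s + 1).multichoose m = (m + s).choose s := by
  rw [Nat.multichoose_eq, show s + 1 + m - 1 = m + s by lia, Nat.choose_symm_add]

lemma eval_preHilbertPoly_eq_multichoose (s m : ℕ) :
    (Polynomial.preHilbertPoly ℚ s 0).eval (m : ℚ) = (s + 1).multichoose m := by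
  rw [Polynomial.preHilbertPoly_eq_choose_sub_add ℚ s m.zero_le, multichoose_succ_eq_choose,
    Nat.sub_zero]

variable {h : ℕ → ℕ} {p : Polynomial ℚ}

lemma natDegree_le_of_le_multichoose {s C c : ℕ}
    (hp : ∀ᶠ m : ℕ in atTop, (h m : ℚ) = p.eval (m : ℚ))
    (hle : ∀ m, h (m + c) ≤ C * (s + 1).multichoose m) : p.natDegree ≤ s := by
  have hbound : ∀ᶠ m : ℕ in atTop, (Polynomial.taylor (c : ℚ) p).eval (m : ℚ) ≤
      (Polynomial.C (C : ℚ) * Polynomial.preHilbertPoly ℚ s 0).eval (m : ℚ) := by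
    filter_upwards [(tendsto_add_atTop_nat c).eventually hp] with m hm
    rw [Polynomial.taylor_eval, Polynomial.eval_mul, Polynomial.eval_C,
      eval_preHilbertPoly_eq_multichoose, ← Nat.cast_add, ← hm]
    exact_mod_cast hle m
  have hnonneg : ∀ᶠ m : ℕ in atTop, 0 ≤ (Polynomial.taylor (c : ℚ) p).eval (m : ℚ) := by
    filter_upwards [(tendsto_add_atTop_nat c).eventually hp] with m hm
    rw [Polynomial.taylor_eval, ← Nat.cast_add, ← hm]
    exact Nat.cast_nonneg _
  calc p.natDegree = (Polynomial.taylor (c : ℚ) p).natDegree := (p.natDegree_taylor _).symm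
    _ ≤ _ := natDegree_le_of_eventually_le hnonneg hbound
    _ ≤ (Polynomial.preHilbertPoly ℚ s 0).natDegree := Polynomial.natDegree_C_mul_le _ _
    _ = s := Polynomial.natDegree_preHilbertPoly ℚ s 0

lemma le_natDegree_of_multichoose_le {s : ℕ}
    (hp : ∀ᶠ m : ℕ in atTop, (h m : ℚ) = p.eval (m : ℚ))
    (hle : ∀ m, (s + 1).multichoose m ≤ h m) : s ≤ p.natDegree := by
  rw [← Polynomial.natDegree_preHilbertPoly ℚ s 0]
  refine natDegree_le_of_eventually_le (.of_forall fun m => ?_) (hp.mono fun m hm => ?_)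
  · rw [eval_preHilbertPoly_eq_multichoose]
    exact Nat.cast_nonneg _
  · rw [eval_preHilbertPoly_eq_multichoose, ← hm]
    exact_mod_cast hle m

lemma natDegree_add_one_eq_of_multichoose_bounds {s C c : ℕ} (hp0 : p ≠ 0)
    (hp : ∀ᶠ m : ℕ in atTop, (h m : ℚ) = p.eval (m : ℚ))
    (hlower : ∀ m, s.multichoose m ≤ h m) (hupper : ∀ m, h (m + c) ≤ C * s.multichoose m) :
    p.natDegree + 1 = s := by
  obtain _ | s := s
  · refine absurd (eq_zero_of_eventually_eval_eq_zero ?_) hp0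
    filter_upwards [hp, eventually_ge_atTop (c + 1)] with m hm hcm
    have hvanish := hupper (m - c)
    rw [Nat.sub_add_cancel (by lia), show m - c = m - c - 1 + 1 by lia,
      Nat.multichoose_zero_succ, mul_zero, Nat.le_zero] at hvanish
    rw [← hm, hvanish, Nat.cast_zero]
  · rw [(natDegree_le_of_le_multichoose hp hupper).antisymm
      (le_natDegree_of_multichoose_le hp hlower)]

lemma natCast_le_factorial_mul_leadingCoeff {D c : ℕ}
    (hp : ∀ᶠ m : ℕ in atTop, (h m : ℚ) = p.eval (m : ℚ))
    (hle : ∀ m, D * (p.natDegree + 1).multichoose m ≤ h (m + c)) :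
    (D : ℚ) ≤ p.natDegree.factorial * p.leadingCoeff := by
  obtain rfl | hD := D.eq_zero_or_pos
  · rw [Nat.cast_zero]
    exact mul_nonneg (Nat.cast_nonneg _)
      (leadingCoeff_nonneg_of_eventually_nonneg (hp.mono fun m hm => hm ▸ Nat.cast_nonneg _))
  have hD_ne : (D : ℚ) ≠ 0 := by positivity
  have hbound : ∀ᶠ m : ℕ in atTop,
      (Polynomial.C (D : ℚ) * Polynomial.preHilbertPoly ℚ p.natDegree 0).eval (m : ℚ) ≤
        (Polynomial.taylor (c : ℚ) p).eval (m : ℚ) := by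
    filter_upwards [(tendsto_add_atTop_nat c).eventually hp] with m hm
    rw [Polynomial.taylor_eval, Polynomial.eval_mul, Polynomial.eval_C,
      eval_preHilbertPoly_eq_multichoose, ← Nat.cast_add, ← hm]
    exact_mod_cast hle m
  have hlead := leadingCoeff_le_of_eventually_le (by
    rw [Polynomial.natDegree_C_mul hD_ne, Polynomial.natDegree_preHilbertPoly,
      Polynomial.natDegree_taylor]) hbound
  rwa [Polynomial.leadingCoeff_mul, Polynomial.leadingCoeff_C,
    Polynomial.leadingCoeff_preHilbertPoly, Polynomial.leadingCoeff_taylor, ← div_eq_mul_inv,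
    div_le_iff₀' (by positivity)] at hlead

lemma le_of_multichoose_add_le_mul_multichoose {s t C c : ℕ}
    (hle : ∀ m, s.multichoose (m + c) ≤ C * t.multichoose m) : s ≤ t := by
  obtain _ | s := s
  · exact t.zero_le
  obtain _ | t := t
  · have hzero := hle 1
    have hpos : 0 < (1 + c + s).choose s := Nat.choose_pos (by lia)
    rw [multichoose_succ_eq_choose, Nat.multichoose_zero_succ, mul_zero] at hzero
    lia
  · have hdeg := natDegree_le_of_le_multichoose (h := (s + 1).multichoose)
      (.of_forall fun m => (eval_preHilbertPoly_eq_multichoose s m).symm) hle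
    rw [Polynomial.natDegree_preHilbertPoly] at hdeg
    lia

end MultichooseGrowth

section IdempotentSemiring

variable {R : Type*} [IdemCommSemiring R] (a b : R)

lemma add_pow_succ_le (n : ℕ) : (a + b) ^ (n + 1) ≤ a * (a + b) ^ n + b ^ (n + 1) := by
  have hb : b ≤ a + b := le_add_of_le_right le_rfl
  induction n with
  | zero => simp
  | succ n ih =>
    calc (a + b) ^ (n + 2) ≤ (a * (a + b) ^ n + b ^ (n + 1)) * (a + b) := by
          rw [pow_succ]; gcongr
      _ = a * (a + b) ^ (n + 1) + a * b ^ (n + 1) + b ^ (n + 2) := by ring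
      _ ≤ a * (a + b) ^ (n + 1) + a * (a + b) ^ (n + 1) + b ^ (n + 2) := by gcongr
      _ = a * (a + b) ^ (n + 1) + b ^ (n + 2) := by rw [add_idem]

lemma add_pow_add_le_of_isTop {t : R} (ht : ∀ x, x ≤ t) (i j : ℕ) :
    (a + b) ^ (i + j) ≤ a ^ i * (a + b) ^ j + b ^ (j + 1) * t := by
  induction i generalizing j with
  | zero => simp
  | succ i ih =>
    calc (a + b) ^ (i + 1 + j) = (a + b) ^ (i + (j + 1)) := by rw [add_right_comm, add_assoc]
      _ ≤ a ^ i * (a + b) ^ (j + 1) + b ^ (j + 1) * (b * t) := by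
          rw [← mul_assoc, ← pow_succ]; exact ih (j + 1)
      _ ≤ a ^ i * (a * (a + b) ^ j + b ^ (j + 1)) + b ^ (j + 1) * t := by
          gcongr
          exacts [add_pow_succ_le a b j, ht _]
      _ = a ^ (i + 1) * (a + b) ^ j + b ^ (j + 1) * (a ^ i + t) := by ring
      _ ≤ a ^ (i + 1) * (a + b) ^ j + b ^ (j + 1) * t := by
          gcongr
          exact ht _

end IdempotentSemiring

section LinearAlgebra

variable {k V : Type*} [Field k] [AddCommGroup V] [Module k V]

lemma le_span_singleton_sup_inf_ker {S : Submodule k V} (φ : V →ₗ[k] k) {x : V} (hxS : x ∈ S)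
    (hx : φ x ≠ 0) : S ≤ Submodule.span k {x} ⊔ S ⊓ LinearMap.ker φ := by
  intro v hv
  rw [← add_sub_cancel ((φ v / φ x) • x) v]
  refine Submodule.add_mem_sup (Submodule.smul_mem _ _ (Submodule.mem_span_singleton_self x))
    ⟨S.sub_mem hv (S.smul_mem _ hxS), LinearMap.mem_ker.mpr ?_⟩
  rw [map_sub, map_smul, smul_eq_mul, div_mul_cancel₀ _ hx, sub_self]

lemma finrank_inf_ker_lt {S : Submodule k V} [FiniteDimensional k S] (φ : V →ₗ[k] k) {x : V}
    (hxS : x ∈ S) (hx : φ x ≠ 0) :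
    Module.finrank k ↥(S ⊓ LinearMap.ker φ) < Module.finrank k S :=
  Submodule.finrank_lt_finrank_of_lt (inf_lt_left.mpr fun hle => hx (hle hxS))

lemma finrank_le_of_map_le_sup {V' : Type*} [AddCommGroup V'] [Module k V'] (f : V →ₗ[k] V')
    {S : Submodule k V} {T U : Submodule k V'} [FiniteDimensional k U]
    (hinj : ∀ v ∈ S, f v ∈ T → v = 0) (hle : S.map f ≤ U ⊔ T) :
    Module.finrank k S ≤ Module.finrank k U := by
  have hker : LinearMap.ker ((T.mkQ ∘ₗ f).domRestrict S) = ⊥ := by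
    refine LinearMap.ker_eq_bot'.mpr fun v hv => Subtype.ext (hinj v v.2 ?_)
    exact (Submodule.Quotient.mk_eq_zero T).mp hv
  calc Module.finrank k S = Module.finrank k ((S.map f).map T.mkQ) := by
        rw [← Submodule.map_comp, ← LinearMap.range_domRestrict,
          LinearMap.finrank_range_of_inj (LinearMap.ker_eq_bot.mp hker)]
    _ ≤ Module.finrank k (U.map T.mkQ) := by
        refine Submodule.finrank_mono ((Submodule.map_mono hle).trans ?_)
        rw [Submodule.map_sup, Submodule.mkQ_map_self, sup_bot_eq]
    _ ≤ Module.finrank k U := Submodule.finrank_map_le _ _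

lemma finrank_map_le_of_inf_ker_le {V₁ V₂ : Type*} [AddCommGroup V₁] [Module k V₁]
    [AddCommGroup V₂] [Module k V₂] {S : Submodule k V} [FiniteDimensional k S]
    {f : V →ₗ[k] V₁} {g : V →ₗ[k] V₂} (hker : S ⊓ LinearMap.ker f ≤ LinearMap.ker g) :
    Module.finrank k (S.map g) ≤ Module.finrank k (S.map f) := by
  have hker_restrict : LinearMap.ker (f.domRestrict S) ≤ LinearMap.ker (g.domRestrict S) :=
    fun v hv => hker ⟨v.2, hv⟩
  have hnullity := Submodule.finrank_mono hker_restrict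
  have hf := (f.domRestrict S).finrank_range_add_finrank_ker
  have hg := (g.domRestrict S).finrank_range_add_finrank_ker
  rw [LinearMap.range_domRestrict] at hf hg
  lia

lemma span_range_coe_finBasis (S : Submodule k V) [FiniteDimensional k S] :
    Submodule.span k (Set.range fun i => (Module.finBasis k S i : V)) = S := by
  have hspan := congrArg (Submodule.map S.subtype) (Module.finBasis k S).span_eq
  rwa [Submodule.map_span, Submodule.map_top, Submodule.range_subtype, ← Set.range_comp] at hspan

end LinearAlgebra

section SubmoduleProducts

variable {k A : Type*} [Field k] [CommRing A] [Algebra k A]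

instance finiteDimensional_pow (W : Submodule k A) [FiniteDimensional k W] (m : ℕ) :
    FiniteDimensional k ↥(W ^ m) :=
  Module.Finite.iff_fg.mpr ((Module.Finite.iff_fg.mp inferInstance).pow m)

instance finiteDimensional_mul (U V : Submodule k A) [FiniteDimensional k U]
    [FiniteDimensional k V] : FiniteDimensional k ↥(U * V) :=
  Module.Finite.iff_fg.mpr
    ((Module.Finite.iff_fg.mp inferInstance).mul (Module.Finite.iff_fg.mp inferInstance))

lemma finrank_mul_le (U V : Submodule k A) [FiniteDimensional k U] [FiniteDimensional k V] :
    Module.finrank k ↥(U * V) ≤ Module.finrank k U * Module.finrank k V := by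
  rw [← Submodule.mulMap_range, ← Module.finrank_tensorProduct]
  exact LinearMap.finrank_range_le _

lemma exists_sum_mul_eq_of_mem_mul_span {ι : Type*} [Fintype ι] {U : Submodule k A} {e : ι → A}
    {x : A} (hx : x ∈ U * Submodule.span k (Set.range e)) :
    ∃ c : ι → A, (∀ i, c i ∈ U) ∧ ∑ i, c i * e i = x := by
  induction hx using Submodule.mul_induction_on' with
  | mem_mul_mem u hu v hv =>
    obtain ⟨c, rfl⟩ := (Submodule.mem_span_range_iff_exists_fun k).mp hv
    refine ⟨fun i => c i • u, fun i => U.smul_mem _ hu, ?_⟩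
    simp only [Finset.mul_sum, smul_mul_assoc, mul_smul_comm]
  | add x _ x' _ hx hx' =>
    obtain ⟨c, hc, rfl⟩ := hx
    obtain ⟨c', hc', rfl⟩ := hx'
    refine ⟨c + c', fun i => U.add_mem (hc i) (hc' i), ?_⟩
    simp only [Pi.add_apply, add_mul, Finset.sum_add_distrib]

end SubmoduleProducts

section Forms

variable {σ k A : Type*}

lemma finrank_homogeneousSubmodule [Fintype σ] [CommRing k] [Nontrivial k] (m : ℕ) :
    Module.finrank k (homogeneousSubmodule σ k m) = (Fintype.card σ).multichoose m := by
  classical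
  have hexponents : {d : σ →₀ ℕ | d.degree = m} =
      ↑(Finset.finsuppAntidiag (Finset.univ : Finset σ) m) := by
    ext d
    simp [Finset.mem_finsuppAntidiag, Finsupp.degree_eq_sum]
  rw [homogeneousSubmodule_eq_finsupp_supported, hexponents,
    (AddMonoidAlgebra.supportedEquivFinsupp (S := k) (R := k) _).finrank_eq,
    Module.finrank_finsupp_self]
  simp [Finset.card_finsuppAntidiag_nat_eq_multichoose]

lemma map_aeval_homogeneousSubmodule [CommSemiring k] [CommSemiring A] [Algebra k A] (y : σ → A)
    (m : ℕ) :
    (homogeneousSubmodule σ k m).map (aeval y : MvPolynomial σ k →ₐ[k] A).toLinearMap =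
      Submodule.span k (Set.range y) ^ m := by
  rw [← homogeneousSubmodule_one_pow, Submodule.map_pow, homogeneousSubmodule_one_eq_span_X,
    Submodule.map_span, ← Set.range_comp]
  congr 3
  ext i
  simp

instance finiteDimensional_homogeneousSubmodule [Finite σ] [Field k] (m : ℕ) :
    FiniteDimensional k (homogeneousSubmodule σ k m) :=
  Module.Finite.iff_fg.mpr (homogeneousSubmodule_fg σ k m)

lemma dvd_aeval_line_of_mem_pow_ker_eval [CommRing k] (a b : σ → k) {n : ℕ} {p : MvPolynomial σ k}
    (hp : p ∈ RingHom.ker (eval a) ^ n) :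
    (Polynomial.X ^ n : Polynomial k) ∣
      aeval (fun i => Polynomial.C (a i) + Polynomial.C (b i - a i) * Polynomial.X) p := by
  set line : MvPolynomial σ k →ₐ[k] Polynomial k :=
    aeval fun i => Polynomial.C (a i) + Polynomial.C (b i - a i) * Polynomial.X
  have hker : (RingHom.ker (eval a)).map line ≤ Ideal.span {Polynomial.X} := by
    rw [Ideal.map_le_iff_le_comap]
    intro q hq
    rw [Ideal.mem_comap, Ideal.mem_span_singleton, Polynomial.X_dvd_iff,
      Polynomial.coeff_zero_eq_eval_zero, ← Polynomial.coe_aeval_eq_eval]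
    have hcomp : (Polynomial.aeval (0 : k)).comp line = aeval a := by
      ext i
      simp [line]
    exact (DFunLike.congr_fun hcomp q).trans hq
  rw [← Ideal.mem_span_singleton, ← Ideal.span_singleton_pow]
  refine Ideal.pow_right_mono hker n ?_
  rw [← Ideal.map_pow]
  exact Ideal.mem_map_of_mem line hp

lemma eq_zero_of_mem_pow_ker_eval [CommRing k] [IsDomain k] [Infinite k] {a : σ → k} {n : ℕ}
    {p : MvPolynomial σ k} (hp : p ∈ RingHom.ker (eval a) ^ n) (hdeg : p.totalDegree < n) :
    p = 0 := by
  refine funext fun b => ?_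
  set line : MvPolynomial σ k →ₐ[k] Polynomial k :=
    aeval fun i => Polynomial.C (a i) + Polynomial.C (b i - a i) * Polynomial.X
  have hcomp : (Polynomial.aeval (1 : k)).comp line = aeval b := by
    ext i
    simp [line]
  have hline_deg : (line p).natDegree ≤ p.totalDegree * 1 :=
    aeval_natDegree_le p le_rfl _ fun i => by compute_degree
  have hline : line p = 0 :=
    Polynomial.eq_zero_of_dvd_of_natDegree_lt (dvd_aeval_line_of_mem_pow_ker_eval a b hp)
      (by rw [Polynomial.natDegree_X_pow]; lia)
  calc eval b p = Polynomial.aeval (1 : k) (line p) := (DFunLike.congr_fun hcomp p).symm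
    _ = eval b 0 := by rw [hline, map_zero, map_zero]

section FormsAtPoint

variable [Field k]

/-- The space of linear forms vanishing at the point `a`. -/
noncomputable def linearFormsVanishingAt (a : σ → k) : Submodule k (MvPolynomial σ k) :=
  homogeneousSubmodule σ k 1 ⊓ LinearMap.ker (aeval a : MvPolynomial σ k →ₐ[k] k).toLinearMap

variable {a : σ → k} {i : σ}

lemma homogeneousSubmodule_one_eq_sup (hai : a i ≠ 0) :
    homogeneousSubmodule σ k 1 = Submodule.span k {X i} ⊔ linearFormsVanishingAt a := by
  have hX : X i ∈ homogeneousSubmodule σ k 1 := isHomogeneous_X k i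
  refine le_antisymm (le_span_singleton_sup_inf_ker _ hX (by simpa using hai)) ?_
  exact sup_le ((Submodule.span_singleton_le_iff_mem _ _).mpr hX) inf_le_left

lemma finrank_linearFormsVanishingAt_lt [Fintype σ] (hai : a i ≠ 0) :
    Module.finrank k (linearFormsVanishingAt a) < Fintype.card σ := by
  calc Module.finrank k (linearFormsVanishingAt a)
      < Module.finrank k (homogeneousSubmodule σ k 1) :=
        finrank_inf_ker_lt _ (isHomogeneous_X k i) (by simpa using hai)
    _ = Fintype.card σ := by rw [finrank_homogeneousSubmodule, Nat.multichoose_one_right]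

lemma eval_eq_zero_of_mem_linearFormsVanishingAt_mul {U : Submodule k (MvPolynomial σ k)}
    {p : MvPolynomial σ k} (hp : p ∈ linearFormsVanishingAt a * U) : eval a p = 0 := by
  induction hp using Submodule.mul_induction_on' with
  | mem_mul_mem l hl q _ =>
    have hl0 : eval a l = 0 := hl.2
    rw [map_mul, hl0, zero_mul]
  | add p _ q _ hp hq => rw [map_add, hp, hq, add_zero]

lemma exists_ne_zero_of_eval_ne_zero {n : ℕ} {p : MvPolynomial σ k} (hp : p.IsHomogeneous (n + 1))
    (hpa : eval a p ≠ 0) : ∃ i, a i ≠ 0 := by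
  by_contra! ha
  refine hpa ?_
  rw [show a = 0 from _root_.funext ha, eval_zero, constantCoeff_eq]
  exact hp.coeff_eq_zero (by simp)

lemma homogeneousSubmodule_succ_le_span_singleton_sup {n : ℕ} {p : MvPolynomial σ k}
    (hp : p.IsHomogeneous (n + 1)) (hpa : eval a p ≠ 0) :
    homogeneousSubmodule σ k (n + 1) ≤
      Submodule.span k {p} ⊔ linearFormsVanishingAt a * homogeneousSubmodule σ k n := by
  obtain ⟨i, hai⟩ := exists_ne_zero_of_eval_ne_zero hp hpa
  have hsplit : homogeneousSubmodule σ k (n + 1) ≤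
      linearFormsVanishingAt a * homogeneousSubmodule σ k n ⊔ Submodule.span k {X i ^ (n + 1)} := by
    have hle := add_pow_succ_le (linearFormsVanishingAt a) (Submodule.span k {X i}) n
    rwa [add_comm, Submodule.add_eq_sup, ← homogeneousSubmodule_one_eq_sup hai,
      homogeneousSubmodule_one_pow, homogeneousSubmodule_one_pow, Submodule.span_pow,
      Set.singleton_pow] at hle
  refine hsplit.trans (sup_le le_sup_right ((Submodule.span_singleton_le_iff_mem _ _).mpr ?_))
  obtain ⟨q, hq, r, hr, hqr⟩ := Submodule.mem_sup.mp (hsplit hp)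
  obtain ⟨c, rfl⟩ := Submodule.mem_span_singleton.mp hr
  have hc : c ≠ 0 := by
    rintro rfl
    rw [zero_smul, add_zero] at hqr
    exact hpa (hqr ▸ eval_eq_zero_of_mem_linearFormsVanishingAt_mul hq)
  rw [← Submodule.smul_mem_iff _ hc, eq_sub_of_add_eq' hqr]
  exact Submodule.sub_mem _ (Submodule.mem_sup_left (Submodule.mem_span_singleton_self p))
    (Submodule.mem_sup_right hq)

lemma homogeneousSubmodule_add_le_sup_pow_ker_eval (hai : a i ≠ 0) (M m : ℕ) :
    homogeneousSubmodule σ k (M + m) ≤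
      Submodule.span k {X i ^ M} * homogeneousSubmodule σ k m ⊔
        homogeneousSubmodule σ k (M + m) ⊓
          (RingHom.ker (eval a) ^ (m + 1)).restrictScalars k := by
  have hsplit := add_pow_add_le_of_isTop (Submodule.span k {X i}) (linearFormsVanishingAt a)
    (t := ⊤) (fun _ => le_top) M m
  rw [Submodule.add_eq_sup, ← homogeneousSubmodule_one_eq_sup hai, homogeneousSubmodule_one_pow,
    homogeneousSubmodule_one_pow, Submodule.span_pow, Set.singleton_pow] at hsplit
  have hvanish : linearFormsVanishingAt a ^ (m + 1) * ⊤ ≤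
      (RingHom.ker (eval a) ^ (m + 1)).restrictScalars k := by
    rw [Submodule.mul_le]
    intro v hv q _
    refine Ideal.mul_mem_right _ _ ?_
    have hle : linearFormsVanishingAt a ≤ (RingHom.ker (eval a)).restrictScalars k := inf_le_right
    have hpow := pow_le_pow_left' hle (m + 1) hv
    rwa [← Submodule.restrictScalars_pow m.succ_ne_zero] at hpow
  have hmain : Submodule.span k {X i ^ M} * homogeneousSubmodule σ k m ≤
      homogeneousSubmodule σ k (M + m) :=
    (mul_le_mul_left ((Submodule.span_singleton_le_iff_mem _ _).mpr (isHomogeneous_X_pow i M))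
      _).trans (homogeneousSubmodule_mul M m)
  intro f hf
  obtain ⟨q, hq, r, hr, rfl⟩ := Submodule.mem_sup.mp (hsplit hf)
  refine Submodule.add_mem_sup hq ⟨?_, hvanish hr⟩
  simpa using Submodule.sub_mem _ hf (hmain hq)

end FormsAtPoint

end Forms

section Reductions

variable {k A B : Type*} [CommSemiring k] [CommSemiring A] [Algebra k A] [CommSemiring B]
  [Algebra k B]

/-- `Y` is a reduction of `W` in the sense of Northcott and Rees, stated for subspaces of an
algebra instead of ideals: `Y ⊆ W` and `W ^ (N + 1) ⊆ Y W ^ N` for some `N`. When `W` is the space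
of linear forms on a projective scheme, this says that the forms in `Y` have no common zero. -/
def IsReduction (Y W : Submodule k A) : Prop :=
  Y ≤ W ∧ ∃ N, W ^ (N + 1) ≤ Y * W ^ N

namespace IsReduction

variable {Y Y' W : Submodule k A}

lemma refl (W : Submodule k A) : IsReduction W W :=
  ⟨le_rfl, 0, (pow_succ' W 0).le⟩

lemma exists_pow_add_le (h : IsReduction Y W) : ∃ N, ∀ j, W ^ (j + N) ≤ Y ^ j * W ^ N := by
  obtain ⟨-, N, hN⟩ := h
  refine ⟨N, fun j => ?_⟩
  induction j with
  | zero => simp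
  | succ j ih =>
    calc W ^ (j + 1 + N) = W ^ (j + N) * W := by rw [add_right_comm, pow_succ]
      _ ≤ Y ^ j * W ^ N * W := by gcongr
      _ = Y ^ j * W ^ (N + 1) := by ring
      _ ≤ Y ^ j * (Y * W ^ N) := by gcongr
      _ = Y ^ (j + 1) * W ^ N := by ring

lemma trans (h' : IsReduction Y' Y) (h : IsReduction Y W) : IsReduction Y' W := by
  obtain ⟨N, hN⟩ := h.exists_pow_add_le
  obtain ⟨hle, n, hn⟩ := h'
  refine ⟨hle.trans h.1, n + N, ?_⟩
  calc W ^ (n + N + 1) = W ^ (n + 1 + N) := by rw [add_right_comm]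
    _ ≤ Y ^ (n + 1) * W ^ N := hN (n + 1)
    _ ≤ Y' * Y ^ n * W ^ N := by gcongr
    _ ≤ Y' * W ^ n * W ^ N := by gcongr; exact h.1
    _ = Y' * W ^ (n + N) := by ring

lemma map (h : IsReduction Y W) (φ : A →ₐ[k] B) :
    IsReduction (Y.map φ.toLinearMap) (W.map φ.toLinearMap) := by
  obtain ⟨hle, N, hN⟩ := h
  refine ⟨Submodule.map_mono hle, N, ?_⟩
  rw [← Submodule.map_pow, ← Submodule.map_pow, ← Submodule.map_mul]
  exact Submodule.map_mono hN

end IsReduction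

end Reductions

section NoetherNormalization

variable {k A σ : Type*} [Field k] [CommRing A] [Algebra k A]

lemma finrank_span_range_pow_le [Fintype σ] (y : σ → A) (m : ℕ) :
    Module.finrank k ↥(Submodule.span k (Set.range y) ^ m) ≤ (Fintype.card σ).multichoose m := by
  rw [← map_aeval_homogeneousSubmodule, ← finrank_homogeneousSubmodule (k := k)]
  exact Submodule.finrank_map_le _ _

lemma IsReduction.exists_finrank_pow_add_le [Fintype σ] {y : σ → A} {W : Submodule k A}
    [FiniteDimensional k W] (h : IsReduction (Submodule.span k (Set.range y)) W) :
    ∃ C c, ∀ m, Module.finrank k ↥(W ^ (m + c)) ≤ C * (Fintype.card σ).multichoose m := by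
  have := Submodule.finiteDimensional_of_le h.1
  obtain ⟨N, hN⟩ := h.exists_pow_add_le
  refine ⟨Module.finrank k ↥(W ^ N), N, fun m => ?_⟩
  calc Module.finrank k ↥(W ^ (m + N))
      ≤ Module.finrank k ↥(Submodule.span k (Set.range y) ^ m * W ^ N) :=
        Submodule.finrank_mono (hN m)
    _ ≤ Module.finrank k ↥(Submodule.span k (Set.range y) ^ m) * Module.finrank k ↥(W ^ N) :=
        finrank_mul_le _ _
    _ ≤ Module.finrank k ↥(W ^ N) * (Fintype.card σ).multichoose m := by
        rw [mul_comm]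
        exact Nat.mul_le_mul_left _ (finrank_span_range_pow_le y m)

variable (k) in
/-- No nonzero form vanishes at `y`. Unlike algebraic independence this only concerns homogeneous
relations, which is what matters when the ambient algebra is not graded. -/
def FormIndependent (y : σ → A) : Prop :=
  ∀ (m : ℕ) (p : MvPolynomial σ k), p.IsHomogeneous m → aeval y p = 0 → p = 0

lemma FormIndependent.multichoose_le_finrank_pow [Fintype σ] {y : σ → A}
    (hy : FormIndependent k y) {W : Submodule k A} [FiniteDimensional k W] (hyW : ∀ i, y i ∈ W)
    (m : ℕ) : (Fintype.card σ).multichoose m ≤ Module.finrank k ↥(W ^ m) := by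
  rw [← finrank_homogeneousSubmodule (k := k)]
  have hker : LinearMap.ker ((aeval y).toLinearMap.domRestrict (homogeneousSubmodule σ k m)) = ⊥ :=
    LinearMap.ker_eq_bot'.mpr fun p hp => Subtype.ext (hy m p p.2 hp)
  rw [← LinearMap.finrank_range_of_inj (LinearMap.ker_eq_bot.mp hker), LinearMap.range_domRestrict,
    map_aeval_homogeneousSubmodule]
  exact Submodule.finrank_mono
    (pow_le_pow_left' (Submodule.span_le.mpr (Set.range_subset_iff.mpr hyW)) m)

variable [Infinite k] [Nontrivial A]

lemma exists_isReduction_finrank_lt [Fintype σ] {y : σ → A} {m : ℕ} {p : MvPolynomial σ k}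
    (hp : p.IsHomogeneous m) (hp0 : p ≠ 0) (hpy : aeval y p = 0) :
    ∃ Y' : Submodule k A, IsReduction Y' (Submodule.span k (Set.range y)) ∧
      Module.finrank k Y' < Fintype.card σ := by
  obtain ⟨a, hpa⟩ : ∃ a, eval a p ≠ 0 := by
    by_contra! hvanish
    exact hp0 (hp.eq_zero_of_forall_eval_eq_zero hvanish)
  obtain _ | n := m
  · rw [← totalDegree_zero_iff_isHomogeneous, totalDegree_eq_zero_iff_eq_C] at hp
    rw [hp, aeval_C, map_eq_zero_iff _ (algebraMap k A).injective] at hpy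
    exact absurd (by rw [hp, hpy, map_zero]) hp0
  obtain ⟨i, hai⟩ := exists_ne_zero_of_eval_ne_zero hp hpa
  have hV_le : linearFormsVanishingAt a ≤ homogeneousSubmodule σ k 1 := inf_le_left
  have := Submodule.finiteDimensional_of_le hV_le
  refine ⟨(linearFormsVanishingAt a).map (aeval y).toLinearMap, ⟨?_, n, ?_⟩,
    (Submodule.finrank_map_le _ _).trans_lt (finrank_linearFormsVanishingAt_lt hai)⟩
  · rw [← pow_one (Submodule.span k (Set.range y)), ← map_aeval_homogeneousSubmodule]
    exact Submodule.map_mono hV_le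
  · have hmap := Submodule.map_mono (f := (aeval y).toLinearMap)
      (homogeneousSubmodule_succ_le_span_singleton_sup hp hpa)
    rwa [Submodule.map_sup, Submodule.map_mul, map_aeval_homogeneousSubmodule,
      map_aeval_homogeneousSubmodule, Submodule.map_span, Set.image_singleton,
      AlgHom.toLinearMap_apply, hpy, Submodule.span_zero_singleton, bot_sup_eq] at hmap

lemma formIndependent_of_forall_isReduction [Fintype σ] {y : σ → A} {W : Submodule k A}
    (hy : IsReduction (Submodule.span k (Set.range y)) W)
    (hmin : ∀ Y' : Submodule k A, IsReduction Y' W → Fintype.card σ ≤ Module.finrank k Y') :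
    FormIndependent k y := by
  intro m p hp hpy
  by_contra hp0
  obtain ⟨Y', hY', hlt⟩ := exists_isReduction_finrank_lt hp hp0 hpy
  exact (hmin Y' (hY'.trans hy)).not_gt hlt

theorem exists_isReduction_formIndependent (W : Submodule k A) [FiniteDimensional k W] :
    ∃ (s : ℕ) (y : Fin s → A), IsReduction (Submodule.span k (Set.range y)) W ∧
      FormIndependent k y := by
  obtain ⟨Y, hYW, hYmin⟩ := WellFounded.has_min
    (measure fun Y : Submodule k A => Module.finrank k Y).wf {Y | IsReduction Y W}
    ⟨W, IsReduction.refl W⟩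
  have := Submodule.finiteDimensional_of_le hYW.1
  have hY : IsReduction (Submodule.span k (Set.range fun i => (Module.finBasis k Y i : A))) W := by
    rwa [span_range_coe_finBasis]
  refine ⟨_, _, hY, formIndependent_of_forall_isReduction hY fun Y' hY' => ?_⟩
  rw [Fintype.card_fin]
  exact not_lt.mp (hYmin Y' hY')

theorem exists_multichoose_bounds_of_infinite (W : Submodule k A) [FiniteDimensional k W] :
    ∃ s C c : ℕ, ∀ m, s.multichoose m ≤ Module.finrank k ↥(W ^ m) ∧
      Module.finrank k ↥(W ^ (m + c)) ≤ C * s.multichoose m := by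
  obtain ⟨s, y, hred, hind⟩ := exists_isReduction_formIndependent W
  obtain ⟨C, c, hupper⟩ := hred.exists_finrank_pow_add_le
  have hyW : ∀ i, y i ∈ W := fun i => hred.1 (Submodule.subset_span ⟨i, rfl⟩)
  refine ⟨s, C, c, fun m => ⟨?_, ?_⟩⟩
  · simpa only [Fintype.card_fin] using hind.multichoose_le_finrank_pow hyW m
  · simpa only [Fintype.card_fin] using hupper m

end NoetherNormalization

section FormLinearIndependent

variable {k A σ ι : Type*} [Field k] [CommRing A] [Algebra k A]

variable (k) in
/-- The family `e` is linearly independent over the forms in `y`: no nontrivial combination of `e`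
whose coefficients are forms of one common degree evaluated at `y` vanishes. -/
def FormLinearIndependent [Fintype ι] (y : σ → A) (e : ι → A) : Prop :=
  ∀ (j : ℕ) (p : ι → MvPolynomial σ k), (∀ i, (p i).IsHomogeneous j) →
    ∑ i, aeval y (p i) * e i = 0 → p = 0

/-- The values at `y` of the forms of degree `j` belonging to the ideal `𝔞`. -/
noncomputable def formValues (y : σ → A) (j : ℕ) (𝔞 : Ideal (MvPolynomial σ k)) :
    Submodule k A :=
  (homogeneousSubmodule σ k j ⊓ 𝔞.restrictScalars k).map (aeval y).toLinearMap

lemma formValues_top (y : σ → A) (j : ℕ) :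
    formValues y j ⊤ = Submodule.span k (Set.range y) ^ j := by
  rw [formValues, Submodule.restrictScalars_top, inf_top_eq, map_aeval_homogeneousSubmodule]

lemma formValues_mul_le (y : σ → A) (i j : ℕ) (𝔞 𝔟 : Ideal (MvPolynomial σ k)) :
    formValues y i 𝔞 * formValues y j 𝔟 ≤ formValues y (i + j) (𝔞 * 𝔟) := by
  rw [Submodule.mul_le]
  rintro _ ⟨p, ⟨hp, hp𝔞⟩, rfl⟩ _ ⟨q, ⟨hq, hq𝔟⟩, rfl⟩
  exact ⟨p * q, ⟨hp.mul hq, Ideal.mul_mem_mul hp𝔞 hq𝔟⟩, map_mul (aeval y) p q⟩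

lemma aeval_mem_span_range_pow (y : σ → A) {j : ℕ} {p : MvPolynomial σ k}
    (hp : p.IsHomogeneous j) : aeval y p ∈ Submodule.span k (Set.range y) ^ j := by
  rw [← map_aeval_homogeneousSubmodule]
  exact Submodule.mem_map_of_mem hp

lemma exists_sum_aeval_mul_eq_of_mem_formValues_mul_span [Fintype ι] {y : σ → A} {e : ι → A}
    {j : ℕ} {𝔞 : Ideal (MvPolynomial σ k)} {x : A}
    (hx : x ∈ formValues y j 𝔞 * Submodule.span k (Set.range e)) :
    ∃ p : ι → MvPolynomial σ k, (∀ i, (p i).IsHomogeneous j) ∧ (∀ i, p i ∈ 𝔞) ∧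
      ∑ i, aeval y (p i) * e i = x := by
  obtain ⟨c, hc, rfl⟩ := exists_sum_mul_eq_of_mem_mul_span hx
  choose p hp hpc using hc
  exact ⟨p, fun i => (hp i).1, fun i => (hp i).2,
    Finset.sum_congr rfl fun i _ => by rw [← hpc i, AlgHom.toLinearMap_apply]⟩

lemma FormLinearIndependent.linearIndependent [Fintype ι] {y : σ → A} {e : ι → A}
    (h : FormLinearIndependent k y e) : LinearIndependent k e := by
  refine Fintype.linearIndependent_iff.mpr fun c hc i => ?_
  have hC := h 0 (fun i => C (c i)) (fun i => isHomogeneous_C σ (c i)) (by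
    simpa only [aeval_C, ← Algebra.smul_def] using hc)
  exact C_eq_zero.mp (congrFun hC i)

lemma FormLinearIndependent.card_mul_multichoose_le [Fintype σ] [Fintype ι] {y : σ → A} {e : ι → A}
    (h : FormLinearIndependent k y e) (j : ℕ) :
    Fintype.card ι * (Fintype.card σ).multichoose j ≤
      Module.finrank k ↥(Submodule.span k (Set.range y) ^ j * Submodule.span k (Set.range e)) := by
  let combination : (ι → homogeneousSubmodule σ k j) →ₗ[k] A :=
    ∑ i, LinearMap.mulRight k (e i) ∘ₗ (aeval y).toLinearMap ∘ₗ
      (homogeneousSubmodule σ k j).subtype ∘ₗ LinearMap.proj i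
  have happly : ∀ p, combination p = ∑ i, aeval y (p i : MvPolynomial σ k) * e i := fun p => by
    simp [combination]
  have hker : LinearMap.ker combination = ⊥ := by
    refine LinearMap.ker_eq_bot'.mpr fun p hp => ?_
    have hzero := h j (fun i => p i) (fun i => (p i).2) ((happly p).symm.trans hp)
    exact _root_.funext fun i => Subtype.ext (congrFun hzero i)
  have hrange : LinearMap.range combination ≤
      Submodule.span k (Set.range y) ^ j * Submodule.span k (Set.range e) := by
    rintro _ ⟨p, rfl⟩
    rw [happly]
    exact Submodule.sum_mem _ fun i _ => Submodule.mul_mem_mul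
      (aeval_mem_span_range_pow y (p i).2) (Submodule.subset_span ⟨i, rfl⟩)
  have hdim : Module.finrank k (ι → homogeneousSubmodule σ k j) =
      Fintype.card ι * (Fintype.card σ).multichoose j := by
    simp [Module.finrank_pi_fintype, finrank_homogeneousSubmodule]
  have := FiniteDimensional.span_of_finite k (Set.finite_range y)
  have := FiniteDimensional.span_of_finite k (Set.finite_range e)
  rw [← hdim, ← LinearMap.finrank_range_of_inj (LinearMap.ker_eq_bot.mp hker)]
  exact Submodule.finrank_mono hrange

lemma exists_aeval_mul_mem_of_not_formLinearIndependent_cons {D : ℕ} {y : σ → A} {e : Fin D → A}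
    (he : FormLinearIndependent k y e) {g : A}
    (hg : ¬ FormLinearIndependent k y (Fin.cons g e : Fin (D + 1) → A)) :
    ∃ j, ∃ p : MvPolynomial σ k, p.IsHomogeneous j ∧ p ≠ 0 ∧
      aeval y p * g ∈ Submodule.span k (Set.range y) ^ j * Submodule.span k (Set.range e) := by
  unfold FormLinearIndependent at hg
  push Not at hg
  obtain ⟨j, p, hp, hsum, hp0⟩ := hg
  rw [Fin.sum_univ_succ] at hsum
  simp only [Fin.cons_zero, Fin.cons_succ] at hsum
  refine ⟨j, p 0, hp 0, fun h0 => hp0 ?_, ?_⟩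
  · rw [h0, map_zero, zero_mul, zero_add] at hsum
    have htail := he j (fun i => p i.succ) (fun i => hp i.succ) hsum
    exact _root_.funext (Fin.cases h0 (congrFun htail))
  · rw [eq_neg_of_add_eq_zero_left hsum]
    exact Submodule.neg_mem _ (Submodule.sum_mem _ fun i _ => Submodule.mul_mem_mul
      (aeval_mem_span_range_pow y (hp i.succ)) (Submodule.subset_span ⟨i, rfl⟩))

lemma exists_maximal_formLinearIndependent (y : σ → A) (U : Submodule k A)
    [FiniteDimensional k U] :
    ∃ (D : ℕ) (e : Fin D → A), (∀ i, e i ∈ U) ∧ FormLinearIndependent k y e ∧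
      ∀ g ∈ U, ¬ FormLinearIndependent k y (Fin.cons g e : Fin (D + 1) → A) := by
  let sizes : Set ℕ := {D | ∃ e : Fin D → A, (∀ i, e i ∈ U) ∧ FormLinearIndependent k y e}
  have hbdd : BddAbove sizes := by
    refine ⟨Module.finrank k U, ?_⟩
    rintro D ⟨e, heU, he⟩
    rw [← Fintype.card_fin D, ← finrank_span_eq_card he.linearIndependent]
    exact Submodule.finrank_mono (Submodule.span_le.mpr (Set.range_subset_iff.mpr heU))
  have hempty : (0 : ℕ) ∈ sizes :=
    ⟨Fin.elim0, fun i => i.elim0, fun _ _ _ _ => Subsingleton.elim _ _⟩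
  obtain ⟨e, heU, he⟩ := Nat.sSup_mem ⟨0, hempty⟩ hbdd
  refine ⟨_, e, heU, he, fun g hg hcons => ?_⟩
  exact (le_csSup hbdd ⟨Fin.cons g e, Fin.cases hg heU, hcons⟩).not_gt (Nat.lt_succ_self _)

lemma exists_aeval_mul_mem_of_forall_exists {y : σ → A} {E U : Submodule k A}
    [FiniteDimensional k U]
    (h : ∀ g ∈ U, ∃ j, ∃ p : MvPolynomial σ k, p.IsHomogeneous j ∧ p ≠ 0 ∧
      aeval y p * g ∈ Submodule.span k (Set.range y) ^ j * E) :
    ∃ M, ∃ Δ : MvPolynomial σ k, Δ.IsHomogeneous M ∧ Δ ≠ 0 ∧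
      Submodule.span k {aeval y Δ} * U ≤ Submodule.span k (Set.range y) ^ M * E := by
  let b := Module.finBasis k U
  choose j p hp hp0 hmem using fun i => h (b i) (b i).2
  refine ⟨∑ i, j i, ∏ i, p i, IsHomogeneous.prod _ _ _ fun i _ => hp i,
    Finset.prod_ne_zero_iff.mpr fun i _ => hp0 i, ?_⟩
  refine (mul_le_mul_right (span_range_coe_finBasis U).ge _).trans ?_
  rw [Submodule.span_mul_span, Submodule.span_le, Set.singleton_mul]
  rintro _ ⟨_, ⟨i, rfl⟩, rfl⟩
  have hrest : aeval y (∏ i' ∈ Finset.univ.erase i, p i') ∈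
      Submodule.span k (Set.range y) ^ (∑ i' ∈ Finset.univ.erase i, j i') :=
    aeval_mem_span_range_pow y (IsHomogeneous.prod _ _ _ fun i' _ => hp i')
  have hprod := Submodule.mul_mem_mul hrest (hmem i)
  rwa [← mul_assoc, ← mul_assoc, ← map_mul, ← pow_add,
    Finset.prod_erase_mul _ _ (Finset.mem_univ i),
    Finset.sum_erase_add _ _ (Finset.mem_univ i)] at hprod

end FormLinearIndependent

section DegreeBounds

variable {k A σ ι : Type*} [Field k] [CommRing A] [Algebra k A]

lemma pow_mul_mem_formValues_mul {y : σ → A} {E : Submodule k A} {v x : A} {i j : ℕ}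
    {𝔞 : Ideal (MvPolynomial σ k)}
    (hv : ∀ l 𝔟, ∀ z ∈ formValues y l 𝔟 * E, v * z ∈ formValues y (i + l) (𝔞 * 𝔟) * E)
    (hx : x ∈ Submodule.span k (Set.range y) ^ j * E) (t : ℕ) :
    v ^ t * x ∈ formValues y (t * i + j) (𝔞 ^ t) * E := by
  induction t with
  | zero => simpa [formValues_top] using hx
  | succ t ih =>
    rw [pow_succ' v, mul_assoc, pow_succ' 𝔞, add_one_mul, add_comm (t * i), add_assoc]
    exact hv _ _ _ ih

lemma FormLinearIndependent.eq_zero_of_aeval_mul_mem [Infinite k] [Fintype ι] {y : σ → A}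
    {e : ι → A} (h : FormLinearIndependent k y e) {a : σ → k} {g : MvPolynomial σ k} {i j l : ℕ}
    (hg : g.IsHomogeneous i) (hga : eval a g ≠ 0) (hjl : j < l) {x : A}
    (hx : x ∈ Submodule.span k (Set.range y) ^ j * Submodule.span k (Set.range e))
    (hgx : aeval y g * x ∈
      formValues y (i + j) (RingHom.ker (eval a) ^ l) * Submodule.span k (Set.range e)) :
    x = 0 := by
  rw [← formValues_top] at hx
  obtain ⟨r, hr, -, rfl⟩ := exists_sum_aeval_mul_eq_of_mem_formValues_mul_span hx
  obtain ⟨q, hq, hq_mem, hqr⟩ := exists_sum_aeval_mul_eq_of_mem_formValues_mul_span hgx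
  have hcoeff : (fun n => g * r n - q n) = 0 := by
    refine h (i + j) _ (fun n => (hg.mul (hr n)).sub (hq n)) ?_
    simp only [map_sub, map_mul, sub_mul, Finset.sum_sub_distrib, hqr, Finset.mul_sum, mul_assoc,
      sub_self]
  have hr0 : ∀ n, r n = 0 := fun n => by
    have hgr : g * r n ∈ RingHom.ker (eval a) ^ l := by
      rw [sub_eq_zero.mp (congrFun hcoeff n)]
      exact hq_mem n
    have := RingHom.ker_isMaximal_of_surjective (eval a) fun c => ⟨C c, eval_C c⟩
    have hr_mem := (Ideal.IsMaximal.mul_mem_pow _ hgr).resolve_left hga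
    exact eq_zero_of_mem_pow_ker_eval hr_mem ((hr n).totalDegree_le.trans_lt hjl)
  simp only [hr0, map_zero, zero_mul, Finset.sum_const_zero]

lemma mul_mul_mem_formValues_mul {y : σ → A} {E : Submodule k A} {z u : A} {i c : ℕ}
    {𝔞 : Ideal (MvPolynomial σ k)}
    (hz : Submodule.span k {z} * (E * E) ≤ Submodule.span k (Set.range y) ^ c * E)
    (hu : u ∈ formValues y i 𝔞 * E) (l : ℕ) (𝔟 : Ideal (MvPolynomial σ k)) {x : A}
    (hx : x ∈ formValues y l 𝔟 * E) : z * u * x ∈ formValues y (c + i + l) (𝔞 * 𝔟) * E := by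
  have hle : Submodule.span k {z} * (formValues y i 𝔞 * E) * (formValues y l 𝔟 * E) ≤
      formValues y (c + i + l) (𝔞 * 𝔟) * E :=
    calc Submodule.span k {z} * (formValues y i 𝔞 * E) * (formValues y l 𝔟 * E)
        = Submodule.span k {z} * (E * E) * (formValues y i 𝔞 * formValues y l 𝔟) := by ring
      _ ≤ formValues y c ⊤ * E * formValues y (i + l) (𝔞 * 𝔟) := by
          rw [formValues_top]
          gcongr
          exact formValues_mul_le y i l 𝔞 𝔟
      _ = formValues y c ⊤ * formValues y (i + l) (𝔞 * 𝔟) * E := by ring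
      _ ≤ formValues y (c + (i + l)) (⊤ * (𝔞 * 𝔟)) * E := by
          gcongr
          exact formValues_mul_le y c (i + l) ⊤ (𝔞 * 𝔟)
      _ = formValues y (c + i + l) (𝔞 * 𝔟) * E := by rw [Ideal.top_mul, add_assoc]
  exact hle (Submodule.mul_mem_mul
    (Submodule.mul_mem_mul (Submodule.mem_span_singleton_self z) hu) hx)

section Denominator

variable [Fintype ι]

/-- A form `δ` of degree `M + N` that is a regular element and clears the denominators of all
powers of `W`: each `δ W ^ j` is contained in the span of `e ⊆ W ^ N` over the forms of degree
`M + j`, over which `e` is independent. -/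
structure IsCommonDenominator (W : Submodule k A) (y : σ → A) (e : ι → A) (M N : ℕ)
    (δ : MvPolynomial σ k) : Prop where
  isHomogeneous : δ.IsHomogeneous (M + N)
  regular : aeval y δ ∈ nonZeroDivisors A
  independent : FormLinearIndependent k y e
  span_le : Submodule.span k (Set.range e) ≤ W ^ N
  mul_pow_le : ∀ j, Submodule.span k {aeval y δ} * W ^ j ≤
    Submodule.span k (Set.range y) ^ (M + j) * Submodule.span k (Set.range e)

namespace IsCommonDenominator

variable {W : Submodule k A} {y : σ → A} {e : ι → A} {δ : MvPolynomial σ k} {M N : ℕ} {a : σ → k}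

lemma mul_mem (h : IsCommonDenominator W y e M N δ) {j : ℕ} {x : A} (hx : x ∈ W ^ j) :
    aeval y δ * x ∈
      Submodule.span k (Set.range y) ^ (M + j) * Submodule.span k (Set.range e) :=
  h.mul_pow_le j (Submodule.mul_mem_mul (Submodule.mem_span_singleton_self _) hx)

variable [Infinite k] [IsReduced A]

-- Multiplicities at `a` beat degrees: `δ ^ (2t + 1) f ^ t` vanishes to order `(m + 1) t` at `a`,
-- while `δ f ^ t` has coefficients of degree only `M + t m`.
lemma eq_zero_of_mul_mem (h : IsCommonDenominator W y e M N δ)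
    (hδa : eval a δ ≠ 0) {m : ℕ} {f : A} (hf : f ∈ W ^ m)
    (hδf : aeval y δ * f ∈
      formValues y (M + m) (RingHom.ker (eval a) ^ (m + 1)) * Submodule.span k (Set.range e)) :
    f = 0 := by
  set E := Submodule.span k (Set.range e)
  set t := M + 1
  have hEE : Submodule.span k {aeval y δ} * (E * E) ≤
      Submodule.span k (Set.range y) ^ (M + (N + N)) * E := by
    refine le_trans ?_ (h.mul_pow_le (N + N))
    rw [pow_add]
    exact mul_le_mul_right (mul_le_mul' h.span_le h.span_le) _
  have hδ_mem : aeval y δ ∈ Submodule.span k (Set.range y) ^ M * E := by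
    have hone : (1 : A) ∈ W ^ 0 := by rw [pow_zero]; exact Submodule.one_le.mp le_rfl
    simpa only [mul_one, add_zero] using h.mul_mem hone
  have hvanish := pow_mul_mem_formValues_mul (v := aeval y δ * (aeval y δ * f))
    (fun l 𝔟 _ hz => mul_mul_mem_formValues_mul hEE hδf l 𝔟 hz) hδ_mem t
  have hft : aeval y δ * f ^ t ∈ Submodule.span k (Set.range y) ^ (M + m * t) * E :=
    h.mul_mem (by rw [pow_mul]; exact Submodule.pow_mem_pow _ hf t)
  have hzero : aeval y δ * f ^ t = 0 := by
    refine h.independent.eq_zero_of_aeval_mul_mem (h.isHomogeneous.pow (2 * t)) (l := (m + 1) * t)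
      (by rw [map_pow]; exact pow_ne_zero _ hδa) (by lia) hft ?_
    convert hvanish using 1
    · rw [pow_mul]; congr 2; ring
    · rw [map_pow]; ring
  have hft0 : f ^ t = 0 := (mul_left_mem_nonZeroDivisors_eq_zero_iff h.regular).mp hzero
  exact pow_eq_zero_iff M.succ_ne_zero |>.mp hft0

lemma finrank_pow_le [Fintype σ] (h : IsCommonDenominator W y e M N δ) {i : σ}
    (hai : a i ≠ 0) (hδa : eval a δ ≠ 0) (m : ℕ) :
    Module.finrank k ↥(W ^ m) ≤ Fintype.card ι * (Fintype.card σ).multichoose m := by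
  let E := Submodule.span k (Set.range e)
  let Y := Submodule.span k (Set.range y)
  have := FiniteDimensional.span_of_finite k (Set.finite_range y)
  have := FiniteDimensional.span_of_finite k (Set.finite_range e)
  have hsplit : Y ^ (M + m) ≤ Submodule.span k {y i ^ M} * Y ^ m ⊔
      formValues y (M + m) (RingHom.ker (eval a) ^ (m + 1)) := by
    have hmap := Submodule.map_mono (f := (aeval y).toLinearMap)
      (homogeneousSubmodule_add_le_sup_pow_ker_eval hai M m)
    rwa [Submodule.map_sup, Submodule.map_mul, map_aeval_homogeneousSubmodule,
      map_aeval_homogeneousSubmodule, Submodule.map_span, Set.image_singleton,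
      AlgHom.toLinearMap_apply, map_pow, aeval_X] at hmap
  calc Module.finrank k ↥(W ^ m)
      ≤ Module.finrank k ↥(Submodule.span k {y i ^ M} * Y ^ m * E) := by
        refine finrank_le_of_map_le_sup (LinearMap.mulLeft k (aeval y δ))
          (fun f hf hδf => h.eq_zero_of_mul_mem hδa hf hδf) ?_
        rw [← Submodule.sup_mul, Submodule.map_le_iff_le_comap]
        exact fun f hf => mul_le_mul_left hsplit _ (h.mul_mem hf)
    _ ≤ Module.finrank k (Submodule.span k {y i ^ M}) * Module.finrank k ↥(Y ^ m) *
          Module.finrank k E :=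
        (finrank_mul_le _ _).trans (Nat.mul_le_mul_right _ (finrank_mul_le _ _))
    _ ≤ 1 * (Fintype.card σ).multichoose m * Fintype.card ι := by
        gcongr
        · simpa using finrank_span_le_card (R := k) {y i ^ M}
        · exact finrank_span_range_pow_le y m
        · exact finrank_range_le_card e
    _ = Fintype.card ι * (Fintype.card σ).multichoose m := by ring

end IsCommonDenominator

end Denominator

variable (k) in
/-- Every nonzero form takes a regular value at `y`. -/
def FormRegular (y : σ → A) : Prop :=
  ∀ (m : ℕ) (p : MvPolynomial σ k), p.IsHomogeneous m → p ≠ 0 → aeval y p ∈ nonZeroDivisors A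

lemma exists_isCommonDenominator [Nonempty σ] {W : Submodule k A} [FiniteDimensional k W]
    {y : σ → A} (hred : IsReduction (Submodule.span k (Set.range y)) W)
    (hreg : FormRegular k y) :
    ∃ (D M N : ℕ) (e : Fin D → A) (δ : MvPolynomial σ k), δ ≠ 0 ∧
      IsCommonDenominator W y e M N δ := by
  let i := Classical.arbitrary σ
  obtain ⟨N, hN⟩ := hred.exists_pow_add_le
  obtain ⟨D, e, heW, he, hmax⟩ := exists_maximal_formLinearIndependent y (W ^ N)
  obtain ⟨M, Δ, hΔ, hΔ0, hΔW⟩ := exists_aeval_mul_mem_of_forall_exists fun g hg =>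
    exists_aeval_mul_mem_of_not_formLinearIndependent_cons he (hmax g hg)
  have hδ : (Δ * X i ^ N).IsHomogeneous (M + N) := hΔ.mul (isHomogeneous_X_pow i N)
  have hδ0 : Δ * X i ^ N ≠ 0 := mul_ne_zero hΔ0 (pow_ne_zero _ (X_ne_zero i))
  refine ⟨D, M, N, e, Δ * X i ^ N, hδ0, hδ, hreg _ _ hδ hδ0, he,
    Submodule.span_le.mpr (Set.range_subset_iff.mpr heW), fun j => ?_⟩
  set Y := Submodule.span k (Set.range y)
  have hyi : Submodule.span k {y i ^ N} ≤ W ^ N :=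
    (Submodule.span_singleton_le_iff_mem _ _).mpr
      (Submodule.pow_mem_pow _ (hred.1 (Submodule.subset_span ⟨i, rfl⟩)) N)
  calc Submodule.span k {aeval y (Δ * X i ^ N)} * W ^ j
      = Submodule.span k {aeval y Δ} * (Submodule.span k {y i ^ N} * W ^ j) := by
        rw [map_mul, map_pow, aeval_X, ← mul_assoc, Submodule.span_mul_span,
          Set.singleton_mul_singleton]
    _ ≤ Submodule.span k {aeval y Δ} * (W ^ N * W ^ j) := by gcongr
    _ = Submodule.span k {aeval y Δ} * W ^ (j + N) := by rw [← pow_add, add_comm]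
    _ ≤ Submodule.span k {aeval y Δ} * (Y ^ j * W ^ N) := by gcongr; exact hN j
    _ = Y ^ j * (Submodule.span k {aeval y Δ} * W ^ N) := by ring
    _ ≤ Y ^ j * (Y ^ M * Submodule.span k (Set.range e)) := by gcongr
    _ = Y ^ (M + j) * Submodule.span k (Set.range e) := by ring

theorem exists_mul_multichoose_bounds_of_formRegular [Infinite k] [IsReduced A]
    [Fintype σ] [Nonempty σ]
    {W : Submodule k A} [FiniteDimensional k W] {y : σ → A}
    (hred : IsReduction (Submodule.span k (Set.range y)) W) (hreg : FormRegular k y) :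
    ∃ D c, ∀ m, Module.finrank k ↥(W ^ m) ≤ D * (Fintype.card σ).multichoose m ∧
      D * (Fintype.card σ).multichoose m ≤ Module.finrank k ↥(W ^ (m + c)) := by
  obtain ⟨D, M, N, e, δ, hδ0, hδ⟩ := exists_isCommonDenominator hred hreg
  let i := Classical.arbitrary σ
  obtain ⟨a, ha⟩ : ∃ a, eval a (X i * δ) ≠ 0 := by
    by_contra! hvanish
    exact mul_ne_zero (X_ne_zero i) hδ0 (funext fun a => by rw [hvanish, map_zero])
  rw [map_mul, eval_X] at ha
  refine ⟨D, N, fun m => ⟨?_, ?_⟩⟩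
  · simpa using hδ.finrank_pow_le (left_ne_zero_of_mul ha) (right_ne_zero_of_mul ha) m
  · refine le_trans ?_ (Submodule.finrank_mono (pow_add W m N ▸
      mul_le_mul' (pow_le_pow_left' hred.1 m) hδ.span_le))
    simpa using hδ.independent.card_mul_multichoose_le m

end DegreeBounds

section DomainFamilies

variable {k A ι : Type*} [Field k] [CommRing A] [Algebra k A] {B : ι → Type*}
  [∀ i, CommRing (B i)] [∀ i, IsDomain (B i)] [∀ i, Algebra k (B i)]

lemma formRegular_of_jointly_injective {σ : Type*} (φ : ∀ i, A →ₐ[k] B i)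
    (hφ : ∀ a, (∀ i, φ i a = 0) → a = 0) {y : σ → A}
    (hy : ∀ i, FormIndependent k (φ i ∘ y)) : FormRegular k y := by
  refine fun m p hp hp0 => mem_nonZeroDivisors_iff_left.mpr fun x hx => ?_
  refine hφ x fun i => ?_
  have hpi : φ i (aeval y p) ≠ 0 := by
    rw [comp_aeval_apply]
    exact fun h0 => hp0 (hy i m p hp h0)
  have hprod : φ i (aeval y p) * φ i x = 0 := by rw [← map_mul, hx, map_zero]
  exact (mul_eq_zero.mp hprod).resolve_left hpi

lemma isReduced_of_jointly_injective (φ : ∀ i, A →ₐ[k] B i)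
    (hφ : ∀ a, (∀ i, φ i a = 0) → a = 0) : IsReduced A := by
  refine ⟨fun a ha => hφ a fun i => ?_⟩
  exact (ha.map (φ i)).eq_zero

lemma le_finrank_of_isReduction {Z W : Submodule k A} [FiniteDimensional k W] {s : ℕ}
    (hZ : IsReduction Z W) (hs : ∀ m, s.multichoose m ≤ Module.finrank k ↥(W ^ m)) :
    s ≤ Module.finrank k Z := by
  have := Submodule.finiteDimensional_of_le hZ.1
  rw [← span_range_coe_finBasis Z] at hZ
  obtain ⟨C, c, hC⟩ := hZ.exists_finrank_pow_add_le
  rw [Fintype.card_fin] at hC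
  exact le_of_multichoose_add_le_mul_multichoose fun m => (hs (m + c)).trans (hC m)

theorem exists_mul_multichoose_bounds_of_infinite [Infinite k] [Nontrivial A]
    (φ : ∀ i, A →ₐ[k] B i) (hφ : ∀ a, (∀ i, φ i a = 0) → a = 0)
    (W : Submodule k A) [FiniteDimensional k W] {s C c : ℕ} (hs : 0 < s)
    (hlower : ∀ i m, s.multichoose m ≤ Module.finrank k ↥((W.map (φ i).toLinearMap) ^ m))
    (hupper : ∀ m, Module.finrank k ↥(W ^ (m + c)) ≤ C * s.multichoose m) :
    ∃ D c, ∀ m, Module.finrank k ↥(W ^ m) ≤ D * s.multichoose m ∧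
      D * s.multichoose m ≤ Module.finrank k ↥(W ^ (m + c)) := by
  obtain ⟨t, y, hred, hy⟩ := exists_isReduction_formIndependent W
  have hyW : ∀ i, y i ∈ W := fun i => hred.1 (Submodule.subset_span ⟨i, rfl⟩)
  have hts : t ≤ s := le_of_multichoose_add_le_mul_multichoose fun m => by
    simpa using (hy.multichoose_le_finrank_pow hyW (m + c)).trans (hupper m)
  have hred_map : ∀ i, IsReduction (Submodule.span k (Set.range (φ i ∘ y)))
      (W.map (φ i).toLinearMap) := fun i => by
    have h := hred.map (φ i)
    rwa [Submodule.map_span, ← Set.range_comp] at h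
  have hst : s = t := by
    obtain ⟨i⟩ : Nonempty ι := by
      by_contra hempty
      exact one_ne_zero (hφ 1 fun i => (hempty ⟨i⟩).elim)
    refine (le_finrank_of_isReduction (hred_map i) (hlower i)).trans ?_ |>.antisymm hts
    exact (finrank_range_le_card (φ i ∘ y)).trans_eq (Fintype.card_fin t)
  subst hst
  have hreg : FormRegular k y := formRegular_of_jointly_injective φ hφ fun i =>
    formIndependent_of_forall_isReduction (hred_map i) fun Z hZ => by
      simpa using le_finrank_of_isReduction hZ (hlower i)
  have := isReduced_of_jointly_injective φ hφ
  have : Nonempty (Fin s) := Fin.pos_iff_nonempty.mp hs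
  simpa using exists_mul_multichoose_bounds_of_formRegular hred hreg

end DomainFamilies

section ScalarExtension

variable {k A A' : Type*} (K : Type*) [Field k] [Field K]
  [CommRing A] [Algebra k A] [CommRing A'] [Algebra k A'] [Algebra K A']

/-- The `K`-subspace of `A'` generated by the image of `V`, for algebras `A` over `k` and `A'` over
an extension `K` of `k`. -/
def extendScalars (f : A →ₐ[k] A') (V : Submodule k A) : Submodule K A' :=
  Submodule.span K (V.map f.toLinearMap : Set A')

lemma map_extendScalars {B B' : Type*} [CommRing B] [Algebra k B] [CommRing B'] [Algebra k B']
    [Algebra K B'] {f : A →ₐ[k] A'} {g : B →ₐ[k] B'} (φ : A →ₐ[k] B) (φ' : A' →ₐ[K] B')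
    (hφ : ∀ a, φ' (f a) = g (φ a)) (V : Submodule k A) :
    (extendScalars K f V).map φ'.toLinearMap = extendScalars K g (V.map φ.toLinearMap) := by
  simp only [extendScalars, Submodule.map_span, Submodule.map_coe, Set.image_image,
    AlgHom.toLinearMap_apply, hφ]

variable [Algebra k K] [IsScalarTower k K A']

lemma extendScalars_span (f : A →ₐ[k] A') (S : Set A) :
    extendScalars K f (Submodule.span k S) = Submodule.span K (f '' S) := by
  rw [extendScalars, Submodule.map_span, Submodule.span_span_of_tower]
  rfl

lemma extendScalars_pow (f : A →ₐ[k] A') (V : Submodule k A) (m : ℕ) :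
    extendScalars K f (V ^ m) = extendScalars K f V ^ m := by
  conv_lhs => rw [← Submodule.span_eq V, Submodule.span_pow]
  rw [extendScalars_span, Set.image_pow, ← Submodule.span_pow]
  rfl

lemma finiteDimensional_extendScalars (f : A →ₐ[k] A') (V : Submodule k A)
    [FiniteDimensional k V] : FiniteDimensional K (extendScalars K f V) := by
  rw [← span_range_coe_finBasis V, extendScalars_span]
  exact FiniteDimensional.span_of_finite K ((Set.finite_range _).image f)

lemma finrank_extendScalars {f : A →ₐ[k] A'}
    (hf : ∀ (n : ℕ) (b : Fin n → A), LinearIndependent k b → LinearIndependent K (f ∘ b))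
    (V : Submodule k A) [FiniteDimensional k V] :
    Module.finrank K (extendScalars K f V) = Module.finrank k V := by
  have hb : LinearIndependent k fun i => (Module.finBasis k V i : A) :=
    (Module.finBasis k V).linearIndependent.map' V.subtype V.ker_subtype
  conv_lhs => rw [← span_range_coe_finBasis V]
  rw [extendScalars_span, ← Set.range_comp, finrank_span_eq_card (hf _ _ hb), Fintype.card_fin]

end ScalarExtension

section LaurentSeriesExtension

/-- The coefficientwise extension of a ring homomorphism to Laurent series. -/
noncomputable def laurentMap {R S : Type*} [CommRing R] [CommRing S] (f : R →+* S) :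
    LaurentSeries R →+* LaurentSeries S where
  toFun x := x.map f
  map_zero' := HahnSeries.map_zero (f : ZeroHom R S)
  map_one' := HahnSeries.map_one f.toMonoidWithZeroHom
  map_add' _ _ := HahnSeries.map_add (f : R →+ S)
  map_mul' _ _ := HahnSeries.map_mul (f : R →ₙ+* S)

variable {k A : Type*} [Field k] [CommRing A] [Algebra k A]

/-- Laurent series over a `k`-algebra `A` as an algebra over the infinite field `k((t))`. In
contrast to `A ⊗ k((t))` they form a domain as soon as `A` is one. -/
noncomputable abbrev laurentAlgebra (k A : Type*) [Field k] [CommRing A] [Algebra k A] :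
    Algebra (LaurentSeries k) (LaurentSeries A) :=
  (laurentMap (algebraMap k A)).toAlgebra

/-- Laurent series over a `k`-algebra `A` as a `k`-algebra via constant series; this is not the form
in which instance search finds the structure, which goes through power series. -/
noncomputable abbrev laurentConstAlgebra (k A : Type*) [Field k] [CommRing A] [Algebra k A] :
    Algebra k (LaurentSeries A) :=
  HahnSeries.instAlgebra

attribute [local instance] laurentAlgebra laurentConstAlgebra

instance isScalarTower_laurentSeries : IsScalarTower k (LaurentSeries k) (LaurentSeries A) :=
  IsScalarTower.of_algebraMap_eq (R := k) (S := LaurentSeries k) (A := LaurentSeries A) fun c => by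
    rw [HahnSeries.algebraMap_apply, HahnSeries.algebraMap_apply]
    exact (HahnSeries.map_C c (algebraMap k A)).symm

/-- The inclusion of the constant Laurent series. -/
noncomputable def laurentConst (k A : Type*) [Field k] [CommRing A] [Algebra k A] :
    A →ₐ[k] LaurentSeries A where
  toRingHom := HahnSeries.C
  commutes' _ := HahnSeries.algebraMap_apply.symm

lemma coeff_smul_laurentConst (c : LaurentSeries k) (a : A) (j : ℤ) :
    (c • laurentConst k A a).coeff j = c.coeff j • a := by
  rw [Algebra.smul_def, Algebra.smul_def]
  exact HahnSeries.coeff_mul_single_zero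

lemma linearIndependent_laurentConst (n : ℕ) (b : Fin n → A) (hb : LinearIndependent k b) :
    LinearIndependent (LaurentSeries k) (laurentConst k A ∘ b) := by
  rw [Fintype.linearIndependent_iff] at *
  intro g hg i
  ext j
  refine hb (fun i => (g i).coeff j) ?_ i
  have hcoeff := congrArg (fun x => x.coeff j) hg
  simpa only [HahnSeries.coeff_sum, Function.comp_apply, coeff_smul_laurentConst,
    HahnSeries.coeff_zero] using hcoeff

lemma finrank_extendScalars_laurentConst_pow (V : Submodule k A) [FiniteDimensional k V] (m : ℕ) :
    Module.finrank (LaurentSeries k)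
      ↥(extendScalars (LaurentSeries k) (laurentConst k A) V ^ m) = Module.finrank k ↥(V ^ m) := by
  rw [← extendScalars_pow, finrank_extendScalars _ linearIndependent_laurentConst]

instance infinite_laurentSeries : Infinite (LaurentSeries k) := by
  refine Infinite.of_injective (fun i : ℤ => HahnSeries.single i (1 : k)) fun i j hij => ?_
  by_contra hne
  have hcoeff := congrArg (fun x => x.coeff i) hij
  simp [HahnSeries.coeff_single_of_ne hne] at hcoeff

theorem exists_multichoose_bounds [Nontrivial A] (W : Submodule k A) [FiniteDimensional k W] :
    ∃ s C c : ℕ, ∀ m, s.multichoose m ≤ Module.finrank k ↥(W ^ m) ∧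
      Module.finrank k ↥(W ^ (m + c)) ≤ C * s.multichoose m := by
  have := finiteDimensional_extendScalars (LaurentSeries k) (laurentConst k A) W
  simpa only [finrank_extendScalars_laurentConst_pow] using
    exists_multichoose_bounds_of_infinite (extendScalars (LaurentSeries k) (laurentConst k A) W)

/-- The coefficientwise extension of an algebra homomorphism to Laurent series. -/
noncomputable def laurentAlgHom {B : Type*} [CommRing B] [Algebra k B] (φ : A →ₐ[k] B) :
    LaurentSeries A →ₐ[LaurentSeries k] LaurentSeries B where
  toRingHom := laurentMap φ
  commutes' x := by
    ext j
    exact φ.commutes (x.coeff j)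

theorem exists_mul_multichoose_bounds [Nontrivial A] {ι : Type*} {B : ι → Type*}
    [∀ i, CommRing (B i)] [∀ i, IsDomain (B i)] [∀ i, Algebra k (B i)]
    (φ : ∀ i, A →ₐ[k] B i) (hφ : ∀ a, (∀ i, φ i a = 0) → a = 0)
    (W : Submodule k A) [FiniteDimensional k W] {s C c : ℕ} (hs : 0 < s)
    (hlower : ∀ i m, s.multichoose m ≤ Module.finrank k ↥((W.map (φ i).toLinearMap) ^ m))
    (hupper : ∀ m, Module.finrank k ↥(W ^ (m + c)) ≤ C * s.multichoose m) :
    ∃ D c, ∀ m, Module.finrank k ↥(W ^ m) ≤ D * s.multichoose m ∧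
      D * s.multichoose m ≤ Module.finrank k ↥(W ^ (m + c)) := by
  have := finiteDimensional_extendScalars (LaurentSeries k) (laurentConst k A) W
  have hφ' : ∀ x, (∀ i, laurentAlgHom (φ i) x = 0) → x = 0 := fun x hx => by
    ext j
    exact hφ _ fun i => congrArg (fun z => z.coeff j) (hx i)
  have hbounds := exists_mul_multichoose_bounds_of_infinite (fun i => laurentAlgHom (φ i)) hφ'
    (extendScalars (LaurentSeries k) (laurentConst k A) W) (s := s) (C := C) (c := c) hs ?_ ?_
  · simpa only [finrank_extendScalars_laurentConst_pow] using hbounds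
  · intro i m
    have hmap := map_extendScalars (LaurentSeries k) (f := laurentConst k A)
      (g := laurentConst k (B i)) (φ i) (laurentAlgHom (φ i))
      (fun a => HahnSeries.map_C a (φ i : A →+* B i)) W
    rw [hmap, finrank_extendScalars_laurentConst_pow]
    exact hlower i m
  · simpa only [finrank_extendScalars_laurentConst_pow] using hupper

end LaurentSeriesExtension

section KrullDimension

lemma ringKrullDim_le_of_isIntegral {R S : Type*} [CommRing R] [CommRing S] [Algebra R S]
    [Algebra.IsIntegral R S] : ringKrullDim S ≤ ringKrullDim R :=
  Order.krullDim_le_of_strictMono (PrimeSpectrum.comap (algebraMap R S)) fun p q hpq =>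
    Ideal.IsIntegral.comap_lt_comap (I := p.asIdeal) (J := q.asIdeal) hpq

variable {k A : Type*} [Field k] [CommRing A] [Algebra k A]

lemma formIndependent_of_algebraicIndependent {σ : Type*} {y : σ → A}
    (hy : AlgebraicIndependent k y) : FormIndependent k y := fun _ _ _ hp =>
  (map_eq_zero_iff (aeval y) hy).mp hp

lemma exists_algebraicIndependent_of_le_ringKrullDim [Nontrivial A] [Algebra.FiniteType k A] {d : ℕ}
    (hd : (d : WithBot ℕ∞) ≤ ringKrullDim A) :
    ∃ x : Fin d → A, AlgebraicIndependent k x := by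
  obtain ⟨t, g, hinj, hint⟩ := exists_integral_inj_algHom_of_fg k A
  have hdt : d ≤ t := by
    let := (g : MvPolynomial (Fin t) k →+* A).toAlgebra
    have : Algebra.IsIntegral (MvPolynomial (Fin t) k) A := ⟨hint⟩
    have hdim := hd.trans (ringKrullDim_le_of_isIntegral (R := MvPolynomial (Fin t) k))
    rw [MvPolynomial.ringKrullDim_of_isNoetherianRing, ringKrullDim_eq_zero_of_field,
      Nat.card_fin, zero_add] at hdim
    exact_mod_cast hdim
  have hX : AlgebraicIndependent k (g ∘ X) := (algebraicIndependent_X (Fin t) k).map' hinj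
  exact ⟨_, hX.comp (Fin.castLE hdt) (Fin.castLE_injective hdt)⟩

lemma exists_algebraicIndependent_mem [IsDomain A] {S : Set A} (hS : Algebra.adjoin k S = ⊤)
    {d : ℕ} {x : Fin d → A} (hx : AlgebraicIndependent k x) :
    ∃ y : Fin d → A, (∀ i, y i ∈ S) ∧ AlgebraicIndependent k y := by
  have : Algebra.IsAlgebraic (Algebra.adjoin k S) A :=
    ⟨fun a => isAlgebraic_algebraMap (⟨a, hS ▸ Algebra.mem_top⟩ : Algebra.adjoin k S)⟩
  obtain ⟨B, hBS, hB⟩ := exists_isTranscendenceBasis_subset (R := k) S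
  have hcard := hx.lift_cardinalMk_le_trdeg
  rw [← hB.cardinalMk_eq_trdeg, Cardinal.lift_mk_le'] at hcard
  obtain ⟨φ⟩ := hcard
  exact ⟨fun i => φ i, fun i => hBS (φ i).2, hB.1.comp φ φ.injective⟩

lemma multichoose_le_finrank_span_pow_of_le_ringKrullDim [IsDomain A] {S : Set A} (hfin : S.Finite)
    (hS : Algebra.adjoin k S = ⊤) {d : ℕ} (hd : (d : WithBot ℕ∞) ≤ ringKrullDim A) (m : ℕ) :
    d.multichoose m ≤ Module.finrank k ↥(Submodule.span k S ^ m) := by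
  have : Algebra.FiniteType k A := ⟨⟨hfin.toFinset, by rw [hfin.coe_toFinset, hS]⟩⟩
  have := FiniteDimensional.span_of_finite k hfin
  obtain ⟨x, hx⟩ := exists_algebraicIndependent_of_le_ringKrullDim (k := k) hd
  obtain ⟨y, hyS, hy⟩ := exists_algebraicIndependent_mem hS hx
  simpa only [Fintype.card_fin] using
    (formIndependent_of_algebraicIndependent hy).multichoose_le_finrank_pow
      (fun i => Submodule.subset_span (hyS i)) m

end KrullDimension

section HilbertFunction

variable {k : Type*} [Field k] {n d : ℕ} {I P Q : Ideal (MvPolynomial (Fin (n + 1)) k)}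

/-- The linear part `(k[x₀, …, xₙ]/I)₁` of the coordinate ring, whose powers are the further graded
pieces. -/
noncomputable def linearPart (I : Ideal (MvPolynomial (Fin (n + 1)) k)) :
    Submodule k (MvPolynomial (Fin (n + 1)) k ⧸ I) :=
  Submodule.span k (Set.range fun i => Ideal.Quotient.mkₐ k I (X i))

instance finiteDimensional_linearPart : FiniteDimensional k (linearPart I) :=
  FiniteDimensional.span_of_finite k (Set.finite_range _)

lemma hilbF_eq_finrank_linearPart_pow (I : Ideal (MvPolynomial (Fin (n + 1)) k)) (m : ℕ) :
    hilbF k I m = Module.finrank k ↥(linearPart I ^ m) := by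
  have hmk : Ideal.Quotient.mkₐ k I = aeval fun i => Ideal.Quotient.mkₐ k I (X i) :=
    aeval_unique _
  rw [hilbF, hmk, map_aeval_homogeneousSubmodule, linearPart]

lemma adjoin_range_mk_X_eq_top (I : Ideal (MvPolynomial (Fin (n + 1)) k)) :
    Algebra.adjoin k (Set.range fun i => Ideal.Quotient.mkₐ k I (X i)) = ⊤ := by
  rw [Set.range_comp', ← AlgHom.map_adjoin, adjoin_range_X, Algebra.map_top, AlgHom.range_eq_top]
  exact Ideal.Quotient.mkₐ_surjective k I

lemma map_factorₐ_linearPart (hIQ : I ≤ Q) :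
    (linearPart I).map (Ideal.Quotient.factorₐ k hIQ).toLinearMap = linearPart Q := by
  rw [linearPart, linearPart, Submodule.map_span, ← Set.range_comp]
  rfl

lemma hilbF_eq_eval_hilbP_eventually (hI : hilbP k I ≠ 0) :
    ∀ᶠ m : ℕ in Filter.atTop, (hilbF k I m : ℚ) = (hilbP k I).eval (m : ℚ) := by
  unfold hilbP at *
  split_ifs at hI ⊢ with hexists
  · exact hexists.choose_spec
  · exact absurd rfl hI

lemma nontrivial_quotient_of_hilbP_ne_zero (hI : hilbP k I ≠ 0) :
    Nontrivial (MvPolynomial (Fin (n + 1)) k ⧸ I) := by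
  by_contra htriv
  rw [not_nontrivial_iff_subsingleton] at htriv
  refine hI (eq_zero_of_eventually_eval_eq_zero ?_)
  filter_upwards [hilbF_eq_eval_hilbP_eventually hI] with m hm
  rw [← hm, hilbF, Module.finrank_zero_of_subsingleton, Nat.cast_zero]

lemma exists_multichoose_idealDim_bounds (hI : hilbP k I ≠ 0) :
    ∃ C c : ℕ, ∀ m, (idealDim k I + 1).multichoose m ≤ hilbF k I m ∧
      hilbF k I (m + c) ≤ C * (idealDim k I + 1).multichoose m := by
  have := nontrivial_quotient_of_hilbP_ne_zero hI
  obtain ⟨s, C, c, hbounds⟩ := exists_multichoose_bounds (linearPart I)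
  simp only [← hilbF_eq_finrank_linearPart_pow] at hbounds
  have hs : idealDim k I + 1 = s := natDegree_add_one_eq_of_multichoose_bounds hI
    (hilbF_eq_eval_hilbP_eventually hI) (fun m => (hbounds m).1) fun m => (hbounds m).2
  exact ⟨C, c, hs ▸ hbounds⟩

theorem choose_idealDim_le_hilbF (hP : hilbP k P ≠ 0) (m : ℕ) :
    (m + idealDim k P).choose (idealDim k P) ≤ hilbF k P m := by
  obtain ⟨C, c, hbounds⟩ := exists_multichoose_idealDim_bounds hP
  rw [← multichoose_succ_eq_choose]
  exact (hbounds m).1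

lemma IsUnmixed.multichoose_le_hilbF (hI : IsUnmixed k I d) (hQ : Q ∈ I.minimalPrimes) (m : ℕ) :
    (d + 1).multichoose m ≤ hilbF k Q m := by
  have := hQ.1.1
  have hass : Q ∈ associatedPrimes _ (MvPolynomial (Fin (n + 1)) k ⧸ I) := by
    apply Module.associatedPrimes.minimalPrimes_annihilator_subset_associatedPrimes
    rwa [Ideal.annihilator_quotient]
  rw [hilbF_eq_finrank_linearPart_pow]
  exact multichoose_le_finrank_span_pow_of_le_ringKrullDim (Set.finite_range _)
    (adjoin_range_mk_X_eq_top Q) (hI Q hass).ge m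

lemma eq_zero_of_factorₐ_minimalPrimes_eq_zero (hI : I.IsRadical)
    {a : MvPolynomial (Fin (n + 1)) k ⧸ I}
    (ha : ∀ Q : I.minimalPrimes, Ideal.Quotient.factorₐ k Q.2.1.2 a = 0) : a = 0 := by
  obtain ⟨f, rfl⟩ := Ideal.Quotient.mk_surjective a
  rw [Ideal.Quotient.eq_zero_iff_mem, ← hI.radical, ← Ideal.sInf_minimalPrimes, Ideal.mem_sInf]
  exact fun {Q} hQ => Ideal.Quotient.eq_zero_iff_mem.mp (ha ⟨Q, hQ⟩)

lemma exists_hilbF_mul_multichoose_bounds (hIrad : I.IsRadical)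
    (hIunm : IsUnmixed k I (idealDim k I)) (hI : hilbP k I ≠ 0) :
    ∃ D c : ℕ, ∀ m, hilbF k I m ≤ D * (idealDim k I + 1).multichoose m ∧
      D * (idealDim k I + 1).multichoose m ≤ hilbF k I (m + c) := by
  have := nontrivial_quotient_of_hilbP_ne_zero hI
  have hprime : ∀ Q : I.minimalPrimes, Q.1.IsPrime := fun Q => Q.2.1.1
  obtain ⟨C, c, hupper⟩ := exists_multichoose_idealDim_bounds hI
  simp only [hilbF_eq_finrank_linearPart_pow] at hupper ⊢
  refine exists_mul_multichoose_bounds (fun Q : I.minimalPrimes => Ideal.Quotient.factorₐ k Q.2.1.2)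
    (fun a ha => eq_zero_of_factorₐ_minimalPrimes_eq_zero hIrad ha) (linearPart I)
    (Nat.succ_pos _) (fun Q m => ?_) fun m => (hupper m).2
  rw [map_factorₐ_linearPart, ← hilbF_eq_finrank_linearPart_pow]
  exact hIunm.multichoose_le_hilbF Q.2 m

theorem hilbF_le_idealDeg_mul_choose (hIrad : I.IsRadical)
    (hIunm : IsUnmixed k I (idealDim k I)) (hI : hilbP k I ≠ 0) (m : ℕ) :
    hilbF k I m ≤ idealDeg k I * (m + idealDim k I).choose (idealDim k I) := by
  obtain ⟨D, c, hbounds⟩ := exists_hilbF_mul_multichoose_bounds hIrad hIunm hI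
  have hD : D ≤ idealDeg k I := Nat.le_floor <| natCast_le_factorial_mul_leadingCoeff
    (hilbF_eq_eval_hilbP_eventually hI) fun m => (hbounds m).2
  calc hilbF k I m ≤ D * (idealDim k I + 1).multichoose m := (hbounds m).1
    _ ≤ _ := by
      rw [multichoose_succ_eq_choose]
      exact Nat.mul_le_mul_right _ hD

lemma exists_isHomogeneous_mem_notMem_of_hilbF_lt {m : ℕ} (hlt : hilbF k I m < hilbF k P m) :
    ∃ f ∈ I, f ∉ P ∧ f.IsHomogeneous m := by
  by_contra! hsub
  refine hlt.not_ge (finrank_map_le_of_inf_ker_le fun f hf => Ideal.Quotient.eq_zero_iff_mem.mpr ?_)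
  by_contra hfP
  exact hsub f (Ideal.Quotient.eq_zero_iff_mem.mp hf.2) hfP hf.1

end HilbertFunction

section DegreeEstimate

lemma mul_choose_lt_choose_of_factorial_mul_lt_pow {d e δ m : ℕ} (hde : d ≤ e)
    (hlt : e.factorial * δ < (m + 1) ^ (e - d)) :
    δ * (m + d).choose d < (m + e).choose e := by
  have hsplit : (m + 1).ascFactorial d * (m + 1 + d).ascFactorial (e - d) =
      (m + 1).ascFactorial e := by
    rw [Nat.ascFactorial_mul_ascFactorial, Nat.add_sub_cancel' hde]
  have hpow : (m + 1) ^ (e - d) ≤ (m + 1 + d).ascFactorial (e - d) :=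
    (Nat.pow_le_pow_left (Nat.le_add_right _ _) _).trans (Nat.pow_succ_le_ascFactorial _ _)
  refine lt_of_mul_lt_mul_left (a := e.factorial) ?_ (Nat.zero_le _)
  calc e.factorial * (δ * (m + d).choose d) = (m + d).choose d * (e.factorial * δ) := by ring
    _ < (m + d).choose d * (m + 1 + d).ascFactorial (e - d) :=
        Nat.mul_lt_mul_of_pos_left (hlt.trans_le hpow) (Nat.choose_pos (Nat.le_add_left d m))
    _ ≤ d.factorial * (m + d).choose d * (m + 1 + d).ascFactorial (e - d) :=
        Nat.mul_le_mul_right _ (Nat.le_mul_of_pos_left _ d.factorial_pos)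
    _ = e.factorial * (m + e).choose e := by
        rw [← Nat.ascFactorial_eq_factorial_mul_choose, hsplit,
          Nat.ascFactorial_eq_factorial_mul_choose]

lemma lt_floor_rpow_inv_add_one_pow (a : ℕ) {r : ℕ} (hr : r ≠ 0) :
    a < (⌊(a : ℝ) ^ (r : ℝ)⁻¹⌋₊ + 1) ^ r := by
  have hroot : ((a : ℝ) ^ (r : ℝ)⁻¹) ^ r = a := Real.rpow_inv_natCast_pow a.cast_nonneg hr
  have hlt : ((a : ℝ) ^ (r : ℝ)⁻¹) ^ r < (⌊(a : ℝ) ^ (r : ℝ)⁻¹⌋₊ + 1) ^ r :=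
    pow_lt_pow_left₀ (Nat.lt_floor_add_one _) (by positivity) hr
  rw [hroot] at hlt
  exact_mod_cast hlt

end DegreeEstimate

theorem exists_low_degree_element_outside_prime_general {k : Type*} [Field k] {n d e : ℕ}
    (I P : Ideal (MvPolynomial (Fin (n + 1)) k)) (hIrad : I.IsRadical) (hIunm : IsUnmixed k I d)
    (hIne : hilbP k I ≠ 0) (hIdim : idealDim k I = d)
    (hPne : hilbP k P ≠ 0) (hPdim : idealDim k P = e) (hde : d < e) :
    ∃ f ∈ I, f ∉ P ∧ ∃ m : ℕ, f.IsHomogeneous m ∧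
      (m : ℝ) ≤ ((e.factorial * idealDeg k I : ℕ) : ℝ) ^ ((1 : ℝ) / ((e : ℝ) - d)) := by
  subst hIdim hPdim
  rw [one_div, ← Nat.cast_sub hde.le]
  set a : ℕ := (idealDim k P).factorial * idealDeg k I
  set r : ℕ := idealDim k P - idealDim k I
  let m : ℕ := ⌊(a : ℝ) ^ (r : ℝ)⁻¹⌋₊
  have ha : a < (m + 1) ^ r := lt_floor_rpow_inv_add_one_pow a (Nat.sub_ne_zero_of_lt hde)
  have hlt : hilbF k I m < hilbF k P m :=
    calc hilbF k I m ≤ idealDeg k I * (m + idealDim k I).choose (idealDim k I) :=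
          hilbF_le_idealDeg_mul_choose hIrad hIunm hIne m
      _ < (m + idealDim k P).choose (idealDim k P) :=
          mul_choose_lt_choose_of_factorial_mul_lt_pow hde.le ha
      _ ≤ hilbF k P m := choose_idealDim_le_hilbF hPne m
  obtain ⟨f, hfI, hfP, hf⟩ := exists_isHomogeneous_mem_notMem_of_hilbF_lt hlt
  exact ⟨f, hfI, hfP, m, hf, Nat.floor_le (by positivity)⟩

/-- given `I` unmixed radical of projective dimension `d` and a
homogeneous prime `P` of projective dimension `e > d`, there is a homogeneous
`f ∈ I ∖ P` of degree at most `(e! · deg I)^{1/(e−d)}`. -/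
theorem exists_low_degree_element_outside_prime {k : Type*} [Field k]
    [PerfectField k] {n d e : ℕ}
    (I P : Ideal (MvPolynomial (Fin (n+1)) k))
    (hIhom : IsHomogeneousIdeal I) (hIrad : I.IsRadical) (hIunm : IsUnmixed k I d)
    (hIne : hilbP k I ≠ 0) (hIdim : idealDim k I = d)
    (hPhom : IsHomogeneousIdeal P) (hPprime : P.IsPrime)
    (hPne : hilbP k P ≠ 0) (hPdim : idealDim k P = e) (hde : d < e) :
    ∃ f ∈ I, f ∉ P ∧ ∃ m : ℕ, f.IsHomogeneous m ∧
      (m : ℝ) ≤ ((e.factorial * idealDeg k I : ℕ) : ℝ) ^ ((1 : ℝ) / ((e : ℝ) - d)) :=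
  exists_low_degree_element_outside_prime_general I P hIrad hIunm hIne hIdim hPne hPdim hde
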